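/- Let F_I : ℝ → ℝ be monotone non-decreasing with 0 ≤ F_I(x) ≤ 1 for all x, let ρ be a real number with 0 < ρ ≤ 1, let τ > 0 be a real number with F_I(τ) > 0, and let Δ be a real number with Δ > τ/(F_I(τ)·ρ) and F_I(Δ+τ)·ρ < 1. Then Δ·(F_I(Δ+τ)·ρ)/(1 − F_I(Δ+τ)·ρ) > τ; that is, the tip τ falls below the minimum tip required for immediate inclusion, so by the minimum-tip lemma the producer's best response is delayed inclusion. -/

import Mathlib

/-!
Put `p = F_I (Δ + τ) * ρ`, so that delaying pays `p * (Δ + τ)` in expectation. For fixed `p < 1`,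
solving `τ = p * (Δ + τ)` for `τ` gives the minimum tip `Δ * p / (1 - p)`, so it is enough that
delaying pays more than `τ`. As `Δ > 0`, monotonicity gives `p ≥ F_I τ * ρ`, and already
`F_I τ * ρ * Δ > τ`.
-/

section MinimumTip

variable {K : Type*} [Field K] [LinearOrder K] [IsStrictOrderedRing K]

lemma lt_mul_div_one_sub_iff {p Δ τ : K} (hp : p < 1) :
    τ < Δ * p / (1 - p) ↔ τ < p * (Δ + τ) := by
  rw [lt_div_iff₀ (sub_pos.mpr hp), mul_one_sub, sub_lt_iff_lt_add, ← add_mul, mul_comm]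

lemma tip_lt_delayed_payoff {F : K → K} {ρ τ Δ : K} (hF : MonotoneOn F (Set.Ici τ)) (hρ : 0 < ρ)
    (hτ : 0 ≤ τ) (hFτ : 0 < F τ) (hΔ : τ / (F τ * ρ) < Δ) :
    τ < F (Δ + τ) * ρ * (Δ + τ) := by
  have hq : 0 < F τ * ρ := mul_pos hFτ hρ
  have hΔ_pos : 0 < Δ := (div_nonneg hτ hq.le).trans_lt hΔ
  have hτ_le : τ ≤ Δ + τ := le_add_of_nonneg_left hΔ_pos.le
  have hF_le : F τ ≤ F (Δ + τ) := hF Set.self_mem_Ici hτ_le hτ_le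
  calc
    τ < F τ * ρ * Δ := (div_lt_iff₀' hq).mp hΔ
    _ ≤ F τ * ρ * (Δ + τ) := by gcongr; exact le_add_of_nonneg_right hτ
    _ ≤ F (Δ + τ) * ρ * (Δ + τ) := by gcongr

theorem delayed_inclusion_public_min_tip_general {F : K → K} {ρ τ Δ : K}
    (hF : MonotoneOn F (Set.Ici τ)) (hρ : 0 < ρ) (hτ : 0 ≤ τ) (hFτ : 0 < F τ)
    (hΔ : τ / (F τ * ρ) < Δ) (hp : F (Δ + τ) * ρ < 1) :
    τ < Δ * (F (Δ + τ) * ρ) / (1 - F (Δ + τ) * ρ) :=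
  (lt_mul_div_one_sub_iff hp).mpr (tip_lt_delayed_payoff hF hρ hτ hFτ hΔ)

end MinimumTip

/-- Public mempool proposition, minimum-tip form: if `Δ > τ/(F_I(τ)·ρ)` and
`F_I(Δ+τ)·ρ < 1`, then `Δ·(F_I(Δ+τ)·ρ)/(1 − F_I(Δ+τ)·ρ) > τ`. -/
theorem delayed_inclusion_public_min_tip (F_I : ℝ → ℝ) (hmono : Monotone F_I)
    (hrange : ∀ x, 0 ≤ F_I x ∧ F_I x ≤ 1)
    (ρ : ℝ) (hρ0 : 0 < ρ) (hρ1 : ρ ≤ 1)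
    (τ : ℝ) (hτ : 0 < τ) (hFτ : 0 < F_I τ)
    (Δ : ℝ) (hΔ : Δ > τ / (F_I τ * ρ)) (h1 : F_I (Δ + τ) * ρ < 1) :
    Δ * (F_I (Δ + τ) * ρ) / (1 - F_I (Δ + τ) * ρ) > τ :=
  delayed_inclusion_public_min_tip_general (hmono.monotoneOn _) hρ0 hτ.le hFτ hΔ h1
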